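/- Assume: ‖H‖ ≤ K_H; |f1 - f0 - ⟨g, η⟩ - (1/2)⟨A η, η⟩| ≤ (L_H/2)‖η‖³; G = g exactly; ‖(H - A) η‖ ≤ δ_H ‖η‖; σ ≥ 2 L_H; there is a unit vector u ∈ E with ⟨u, H u⟩ ≤ ν λ_min(H) < 0 and ⟨G, u⟩ ≤ 0, and η^E := t* u where t* ≥ 0 is a global minimizer of t ↦ m(t u) over t ≥ 0; m(η) ≤ m(η^E); λ_min(H) < -ε_H; and δ_H ≤ min{1/6, (1-ρ_TH)/3} · ν ε_H. Then f0 - f1 ≥ ρ_TH · (-m(η)). (The success criterion underlying Corollary 3.2, negative-curvature case with exact gradient information.) -/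

import Mathlib

open RealInnerProductSpace

/-!
Let `-κ < 0` bound the curvature of the model `m` along the unit vector `u` from above. A step of
length `κ / σ` along `u` decreases the model by at least `κ³ / (6σ²)`, so `-m η` is at least that
large. On the other hand, if `H` is accurate up to `δ` along `η` and `σ ≥ 2L`, the actual decrease
`f₀ - f₁` falls short of `-m η` by at most `δ / 2 * ‖η‖² - σ / 12 * ‖η‖³`, whose maximum over all
step lengths is `8δ³ / (3σ²)`. The shortfall is therefore at most the fraction `1 - ρ` of `-m η` as
soon as `16δ³ ≤ (1 - ρ)κ³`.
-/

section CubicModel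

variable {E : Type*} [NormedAddCommGroup E] [InnerProductSpace ℝ E]

/-- The cubic-regularized second-order model of the change of an objective along a step `η`, with
gradient `g`, Hessian approximation `H` and regularization parameter `σ`. Only the quadratic form
of `H` enters, so `H` is an arbitrary linear map. -/
noncomputable def cubicModel (g : E) (H : E →ₗ[ℝ] E) (σ : ℝ) (η : E) : ℝ :=
  ⟪g, η⟫ + (1 / 2) * ⟪H η, η⟫ + (σ / 3) * ‖η‖ ^ 3

theorem cubicModel_smul (g : E) (H : E →ₗ[ℝ] E) (σ : ℝ) {t : ℝ} (ht : 0 ≤ t) (u : E) :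
    cubicModel g H σ (t • u) =
      t * ⟪g, u⟫ + t ^ 2 / 2 * ⟪H u, u⟫ + σ * t ^ 3 / 3 * ‖u‖ ^ 3 := by
  simp only [cubicModel, map_smul, real_inner_smul_left, real_inner_smul_right,
    norm_smul_of_nonneg ht]
  ring

-- `t = κ / σ` minimizes the upper bound `-κ * t ^ 2 / 2 + σ * t ^ 3 / 3` of the model along `u`.
theorem cubicModel_smul_le_of_inner_le_neg {g u : E} {H : E →ₗ[ℝ] E} {σ κ : ℝ}
    (hσ : 0 < σ) (hκ : 0 ≤ κ) (hu : ‖u‖ = 1) (hgu : ⟪g, u⟫ ≤ 0) (hcurv : ⟪H u, u⟫ ≤ -κ) :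
    cubicModel g H σ ((κ / σ) • u) ≤ -(κ ^ 3 / (6 * σ ^ 2)) := by
  have ht : 0 ≤ κ / σ := div_nonneg hκ hσ.le
  calc cubicModel g H σ ((κ / σ) • u)
      = κ / σ * ⟪g, u⟫ + (κ / σ) ^ 2 / 2 * ⟪H u, u⟫ + σ * (κ / σ) ^ 3 / 3 := by
        rw [cubicModel_smul g H σ ht, hu, one_pow, mul_one]
    _ ≤ κ / σ * 0 + (κ / σ) ^ 2 / 2 * -κ + σ * (κ / σ) ^ 3 / 3 := by gcongr
    _ = -(κ ^ 3 / (6 * σ ^ 2)) := by field_simp; ring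

theorem inner_map_self_le_of_norm_sub_le {A H : E →ₗ[ℝ] E} {η : E} {δ : ℝ}
    (h : ‖(H - A) η‖ ≤ δ * ‖η‖) : ⟪A η, η⟫ ≤ ⟪H η, η⟫ + δ * ‖η‖ ^ 2 := by
  have hdiff : ⟪A η - H η, η⟫ ≤ δ * ‖η‖ ^ 2 :=
    calc ⟪A η - H η, η⟫ ≤ ‖A η - H η‖ * ‖η‖ := real_inner_le_norm _ _
      _ = ‖(H - A) η‖ * ‖η‖ := by rw [norm_sub_rev, LinearMap.sub_apply]
      _ ≤ δ * ‖η‖ * ‖η‖ := by gcongr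
      _ = δ * ‖η‖ ^ 2 := by ring
  rw [inner_sub_left] at hdiff
  linarith

-- Equality holds at the maximizer `r = 4 * δ / σ` of the left-hand side, which is therefore a
-- double root of the difference.
theorem quadratic_sub_cubic_le {σ δ r : ℝ} (hσ : 0 < σ) (hδ : 0 ≤ δ) (hr : 0 ≤ r) :
    δ / 2 * r ^ 2 - σ / 12 * r ^ 3 ≤ 8 * δ ^ 3 / (3 * σ ^ 2) := by
  have hfactor : 8 * δ ^ 3 / (3 * σ ^ 2) - (δ / 2 * r ^ 2 - σ / 12 * r ^ 3) =
      (σ * r - 4 * δ) ^ 2 * (σ * r + 2 * δ) / (12 * σ ^ 2) := by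
    field_simp
    ring
  rw [← sub_nonneg, hfactor]
  positivity

theorem sub_le_cubicModel_add {g η : E} {A H : E →ₗ[ℝ] E} {σ L δ f₀ f₁ : ℝ}
    (hσ : 0 < σ) (hδ : 0 ≤ δ) (hσL : 2 * L ≤ σ)
    (hTaylor : f₁ - f₀ - ⟪g, η⟫ - (1 / 2) * ⟪A η, η⟫ ≤ (L / 2) * ‖η‖ ^ 3)
    (hHA : ‖(H - A) η‖ ≤ δ * ‖η‖) :
    f₁ - f₀ ≤ cubicModel g H σ η + 8 * δ ^ 3 / (3 * σ ^ 2) := by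
  have hL : L / 2 * ‖η‖ ^ 3 ≤ σ / 4 * ‖η‖ ^ 3 := by
    gcongr ?_ * _
    linarith
  calc f₁ - f₀ ≤ ⟪g, η⟫ + (1 / 2) * ⟪A η, η⟫ + σ / 4 * ‖η‖ ^ 3 := by linarith
    _ ≤ ⟪g, η⟫ + (1 / 2) * (⟪H η, η⟫ + δ * ‖η‖ ^ 2) + σ / 4 * ‖η‖ ^ 3 := by
      gcongr
      exact inner_map_self_le_of_norm_sub_le hHA
    _ = cubicModel g H σ η + (δ / 2 * ‖η‖ ^ 2 - σ / 12 * ‖η‖ ^ 3) := by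
      unfold cubicModel
      ring
    _ ≤ cubicModel g H σ η + 8 * δ ^ 3 / (3 * σ ^ 2) := by
      gcongr
      exact quadratic_sub_cubic_le hσ hδ (norm_nonneg η)

theorem success_criterion_curvature_case_exact_gradient_general
    {g η u : E} {A H : E →ₗ[ℝ] E} {σ L δ κ ρ f₀ f₁ : ℝ}
    (hσ : 0 < σ) (hδ : 0 ≤ δ) (hκ : 0 < κ) (hσL : 2 * L ≤ σ)
    (hTaylor : f₁ - f₀ - ⟪g, η⟫ - (1 / 2) * ⟪A η, η⟫ ≤ (L / 2) * ‖η‖ ^ 3)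
    (hHA : ‖(H - A) η‖ ≤ δ * ‖η‖)
    (hu : ‖u‖ = 1) (hgu : ⟪g, u⟫ ≤ 0) (hcurv : ⟪H u, u⟫ ≤ -κ)
    (hη : ∀ t : ℝ, 0 ≤ t → cubicModel g H σ η ≤ cubicModel g H σ (t • u))
    (hδκ : 16 * δ ^ 3 ≤ (1 - ρ) * κ ^ 3) :
    ρ * -cubicModel g H σ η ≤ f₀ - f₁ := by
  have hρ : 0 ≤ 1 - ρ :=
    nonneg_of_mul_nonneg_left ((by positivity : 0 ≤ 16 * δ ^ 3).trans hδκ) (pow_pos hκ 3)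
  have hdecrease : κ ^ 3 / (6 * σ ^ 2) ≤ -cubicModel g H σ η :=
    le_neg_of_le_neg <| (hη (κ / σ) (by positivity)).trans
      (cubicModel_smul_le_of_inner_le_neg hσ hκ.le hu hgu hcurv)
  have hshortfall : 8 * δ ^ 3 / (3 * σ ^ 2) ≤ (1 - ρ) * -cubicModel g H σ η :=
    calc 8 * δ ^ 3 / (3 * σ ^ 2) = 16 * δ ^ 3 / (6 * σ ^ 2) := by ring
      _ ≤ (1 - ρ) * κ ^ 3 / (6 * σ ^ 2) := by gcongr
      _ = (1 - ρ) * (κ ^ 3 / (6 * σ ^ 2)) := mul_div_assoc _ _ _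
      _ ≤ (1 - ρ) * -cubicModel g H σ η := by gcongr
  have hactual := sub_le_cubicModel_add hσ hδ hσL hTaylor hHA
  linarith

end CubicModel

theorem sixteen_mul_cube_le_of_le_min_mul {δ κ ρ : ℝ} (hδ : 0 ≤ δ) (hκ : 0 ≤ κ) (hρ : ρ ≤ 1)
    (h : δ ≤ min (1 / 6) ((1 - ρ) / 3) * κ) : 16 * δ ^ 3 ≤ (1 - ρ) * κ ^ 3 := by
  have hsixth : δ ≤ 1 / 6 * κ := h.trans (by gcongr; exact min_le_left _ _)
  have hthird : δ ≤ (1 - ρ) / 3 * κ := h.trans (by gcongr; exact min_le_right _ _)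
  have hρκ : 0 ≤ (1 - ρ) * κ ^ 3 := mul_nonneg (sub_nonneg.mpr hρ) (pow_nonneg hκ 3)
  calc 16 * δ ^ 3 = 16 * (δ ^ 2 * δ) := by ring
    _ ≤ 16 * ((1 / 6 * κ) ^ 2 * ((1 - ρ) / 3 * κ)) := by gcongr
    _ = 4 / 27 * ((1 - ρ) * κ ^ 3) := by ring
    _ ≤ (1 - ρ) * κ ^ 3 := by linarith

/-- The success criterion underlying Corollary 3.2, negative-curvature case
with exact gradient information. -/
theorem success_criterion_curvature_case_exact_gradient
    {E : Type*} [NormedAddCommGroup E] [InnerProductSpace ℝ E] [FiniteDimensional ℝ E]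
    (G g η : E) (H A : E →L[ℝ] E) (hH : IsSelfAdjoint H) (hA : IsSelfAdjoint A)
    (σ L_H K_H ν δ_H ε_H ρ_TH : ℝ) (hσ : 0 < σ) (hL : 0 < L_H) (hK : 0 < K_H)
    (hν : ν ∈ Set.Ioo (0 : ℝ) 1) (hδH : δ_H ∈ Set.Ioo (0 : ℝ) 1)
    (hεH : ε_H ∈ Set.Ioo (0 : ℝ) 1) (hρ : ρ_TH ∈ Set.Ioo (0 : ℝ) 1)
    (m : E → ℝ)
    (hm : ∀ ξ : E, m ξ = ⟪G, ξ⟫ + (1 / 2) * ⟪H ξ, ξ⟫ + (σ / 3) * ‖ξ‖ ^ 3)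
    (lammin : ℝ)
    (hlam : lammin = sInf ((fun u : E => ⟪u, H u⟫) '' {u : E | ‖u‖ = 1}))
    (f0 f1 : ℝ)
    (hHK : ‖H‖ ≤ K_H)
    (hTaylor : |f1 - f0 - ⟪g, η⟫ - (1 / 2) * ⟪A η, η⟫| ≤ (L_H / 2) * ‖η‖ ^ 3)
    (hGg : G = g)
    (hHa : ‖(H - A) η‖ ≤ δ_H * ‖η‖)
    (hσL : σ ≥ 2 * L_H)
    (u : E) (hu : ‖u‖ = 1)
    (hcurv : ⟪u, H u⟫ ≤ ν * lammin) (hneg : ν * lammin < 0)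
    (hGu : ⟪G, u⟫ ≤ 0)
    (tstar : ℝ) (ht : 0 ≤ tstar)
    (hmin : ∀ t : ℝ, 0 ≤ t → m (tstar • u) ≤ m (t • u))
    (ηE : E) (hηE : ηE = tstar • u)
    (hmη : m η ≤ m ηE)
    (hlamsmall : lammin < -ε_H)
    (hδHsmall : δ_H ≤ min (1 / 6) ((1 - ρ_TH) / 3) * ν * ε_H) :
    f0 - f1 ≥ ρ_TH * (-m η) := by
  subst hGg hηE
  obtain rfl : m = cubicModel G H σ := funext hm
  have hκ : 0 < ν * ε_H := mul_pos hν.1 hεH.1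
  have hHu : ⟪H u, u⟫ ≤ -(ν * ε_H) := by
    rw [real_inner_comm, ← mul_neg]
    exact hcurv.trans (mul_le_mul_of_nonneg_left hlamsmall.le hν.1.le)
  exact success_criterion_curvature_case_exact_gradient_general (A := A) hσ hδH.1.le hκ hσL
    (le_of_abs_le hTaylor) hHa hu hGu hHu (fun t ht => hmη.trans (hmin t ht))
    (sixteen_mul_cube_le_of_le_min_mul hδH.1.le hκ.le hρ.2.le (by rwa [← mul_assoc]))
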